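/- Additivity of redundant and synergistic information: if the joint distribution of ((X,X'),(Y,Y'),(Z,Z')) is the product P((x,x'),(y,y'),(z,z')) = p(x,y,z)·p'(x',y',z'), then Red((X,X'),(Y,Y')→(Z,Z')) = Red(X,Y→Z) + Red(X',Y'→Z') and Syn((X,X'),(Y,Y')→(Z,Z')) = Syn(X,Y→Z) + Syn(X',Y'→Z'). -/

import Mathlib

open Finset

/-- Shannon entropy of a distribution on a finite type (natural-log base). -/
noncomputable def ent {α : Type*} [Fintype α] (p : α → ℝ) : ℝ :=
  ∑ a, Real.negMulLog (p a)

/-- Mutual information between the two coordinates of a joint distribution. -/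
noncomputable def mutInfo {α β : Type*} [Fintype α] [Fintype β] (q : α × β → ℝ) : ℝ :=
  ent (fun a => ∑ b, q (a, b)) + ent (fun b => ∑ a, q (a, b)) - ent q

/-- Conditional entropy of the first coordinate given the second: H(A|B) = H(A,B) - H(B). -/
noncomputable def condEntFst {α β : Type*} [Fintype α] [Fintype β] (q : α × β → ℝ) : ℝ :=
  ent q - ent (fun b => ∑ a, q (a, b))

/-- Conditional entropy of the second coordinate given the first: H(B|A) = H(A,B) - H(A). -/
noncomputable def condEntSnd {α β : Type*} [Fintype α] [Fintype β] (q : α × β → ℝ) : ℝ :=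
  ent q - ent (fun a => ∑ b, q (a, b))

section PID

variable {X Y Z : Type*} [Fintype X] [Fintype Y] [Fintype Z]

/-- 𝒳-marginal of a joint distribution on 𝒳×𝒴×𝒵. -/
noncomputable def pX (p : X × Y × Z → ℝ) (x : X) : ℝ := ∑ y, ∑ z, p (x, y, z)

/-- 𝒴-marginal. -/
noncomputable def pY (p : X × Y × Z → ℝ) (y : Y) : ℝ := ∑ x, ∑ z, p (x, y, z)

/-- 𝒵-marginal. -/
noncomputable def pZ (p : X × Y × Z → ℝ) (z : Z) : ℝ := ∑ x, ∑ y, p (x, y, z)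

/-- The do-operation: q(x,y,z) = p(x,y,z)·c(z)/p_Z(z) if p_Z(z) > 0, else 0. -/
noncomputable def doOp (p : X × Y × Z → ℝ) (c : Z → ℝ) : X × Y × Z → ℝ :=
  fun t => if 0 < pZ p t.2.2 then p t * c t.2.2 / pZ p t.2.2 else 0

/-- (𝒳,𝒵)-marginal. -/
noncomputable def margXZ (p : X × Y × Z → ℝ) : X × Z → ℝ := fun t => ∑ y, p (t.1, y, t.2)

/-- (𝒴,𝒵)-marginal. -/
noncomputable def margYZ (p : X × Y × Z → ℝ) : Y × Z → ℝ := fun t => ∑ x, p (x, t.1, t.2)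

/-- (𝒳,𝒴)-marginal. -/
noncomputable def margXY (p : X × Y × Z → ℝ) : X × Y → ℝ := fun t => ∑ z, p (t.1, t.2, z)

/-- c_y(z) = Pr(Z = z | Y = y). -/
noncomputable def cy (p : X × Y × Z → ℝ) (y : Y) : Z → ℝ :=
  fun z => (∑ x, p (x, y, z)) / pY p y

/-- The distribution of (A_y, B_y, C_y) = do(p | c_y). -/
noncomputable def doy (p : X × Y × Z → ℝ) (y : Y) : X × Y × Z → ℝ := doOp p (cy p y)

/-- c^x(z) = Pr(Z = z | X = x). -/
noncomputable def cx (p : X × Y × Z → ℝ) (x : X) : Z → ℝ :=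
  fun z => (∑ y, p (x, y, z)) / pX p x

/-- The distribution of (A^x, B^x, C^x) = do(p | c^x). -/
noncomputable def dox (p : X × Y × Z → ℝ) (x : X) : X × Y × Z → ℝ := doOp p (cx p x)

/-- Unique information Un(X→Z|Y) = Σ_{y : p_Y(y)>0} p_Y(y)·I(A_y;C_y). -/
noncomputable def Un (p : X × Y × Z → ℝ) : ℝ :=
  ∑ y ∈ Finset.univ.filter (fun y => 0 < pY p y), pY p y * mutInfo (margXZ (doy p y))

/-- Unique information Un(Y→Z|X) = Σ_{x : p_X(x)>0} p_X(x)·I(B^x;C^x). -/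
noncomputable def UnYX (p : X × Y × Z → ℝ) : ℝ :=
  ∑ x ∈ Finset.univ.filter (fun x => 0 < pX p x), pX p x * mutInfo (margYZ (dox p x))

/-- Redundant information Red(X,Y→Z) = I(X;Z) − Un(X→Z|Y). -/
noncomputable def Red (p : X × Y × Z → ℝ) : ℝ := mutInfo (margXZ p) - Un p

/-- Conditional mutual information I(X;Z|Y) = H(X,Y) + H(Y,Z) − H(Y) − H(X,Y,Z). -/
noncomputable def condMI (p : X × Y × Z → ℝ) : ℝ :=
  ent (margXY p) + ent (margYZ p) - ent (pY p) - ent p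

/-- Synergistic information Syn(X,Y→Z) = I(X;Z|Y) − Un(X→Z|Y). -/
noncomputable def Syn (p : X × Y × Z → ℝ) : ℝ := condMI p - Un p

end PID

/-!
Entropies of product distributions add, so `I(X;Z)` and `I(X;Z|Y)` are additive and only the unique
information needs an argument. Conditioning on `Y` and intervening on `Z` both act factorwise:
`do(P | c_(y,y'))` is the product of `do(p | c_y)` and `do(p' | c_y')`. Hence each summand of
`Un P` splits as `p_Y(y) p'_Y'(y') (I(A_y;C_y) + I(A'_y';C'_y'))`, and summing over `(y, y')` gives
`Un P = Un p + Un p'`. The same computation works for nonnegative weights that are not normalized,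
each term then being multiplied by the total mass of the other factor.
-/

section Product

variable {α β α' β' : Type*}

/-- The law of an independent pair with laws `f` and `g`; the definition makes sense for arbitrary
weights, which are not required to be nonnegative or normalized. -/
def prodDist (f : α → ℝ) (g : β → ℝ) : α × β → ℝ :=
  fun s => f s.1 * g s.2

/-- The product of a joint law of `(A, B)` and a joint law of `(A', B')`, regrouped as a joint law
of `((A, A'), (B, B'))` so that it has a mutual information between `(A, A')` and `(B, B')`. -/
def prodDist₂ (f : α × β → ℝ) (g : α' × β' → ℝ) : (α × α') × (β × β') → ℝ :=
  fun s => f (s.1.1, s.2.1) * g (s.1.2, s.2.2)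

variable [Fintype α] [Fintype β] [Fintype α'] [Fintype β']

theorem sum_prodDist (f : α → ℝ) (g : β → ℝ) :
    ∑ s, prodDist f g s = (∑ a, f a) * ∑ b, g b := by
  simp only [prodDist, Fintype.sum_prod_type, Fintype.sum_mul_sum]

theorem ent_comp_equiv (e : α ≃ β) (f : β → ℝ) : ent (f ∘ e) = ent f :=
  e.sum_comp fun b => Real.negMulLog (f b)

theorem ent_prodDist (f : α → ℝ) (g : β → ℝ) :
    ent (prodDist f g) = (∑ b, g b) * ent f + (∑ a, f a) * ent g := by
  calc ent (prodDist f g)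
      = ∑ s, (prodDist (Real.negMulLog ∘ f) g s + prodDist f (Real.negMulLog ∘ g) s) :=
        Fintype.sum_congr _ _ fun s => by
          simp only [prodDist, Function.comp_apply, Real.negMulLog_mul, mul_comm (g s.2)]
    _ = (∑ b, g b) * ent f + (∑ a, f a) * ent g := by
        rw [sum_add_distrib, sum_prodDist, sum_prodDist, mul_comm (∑ b, g b)]
        rfl

theorem ent_prodDist₂ (f : α × β → ℝ) (g : α' × β' → ℝ) :
    ent (prodDist₂ f g) = (∑ t, g t) * ent f + (∑ t, f t) * ent g :=
  (ent_comp_equiv (Equiv.prodProdProdComm α α' β β') (prodDist f g)).trans (ent_prodDist f g)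

theorem mutInfo_prodDist₂ (f : α × β → ℝ) (g : α' × β' → ℝ) :
    mutInfo (prodDist₂ f g) = (∑ t, g t) * mutInfo f + (∑ t, f t) * mutInfo g := by
  have fst_marginal : (fun a => ∑ b, prodDist₂ f g (a, b)) =
      prodDist (fun a => ∑ b, f (a, b)) (fun a => ∑ b, g (a, b)) :=
    funext fun a => sum_prodDist (fun b => f (a.1, b)) (fun b => g (a.2, b))
  have snd_marginal : (fun b => ∑ a, prodDist₂ f g (a, b)) =
      prodDist (fun b => ∑ a, f (a, b)) (fun b => ∑ a, g (a, b)) :=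
    funext fun b => sum_prodDist (fun a => f (a, b.1)) (fun a => g (a, b.2))
  rw [mutInfo, fst_marginal, snd_marginal, ent_prodDist, ent_prodDist, ent_prodDist₂,
    ← Fintype.sum_prod_type f, ← Fintype.sum_prod_type g,
    ← Fintype.sum_prod_type_right f, ← Fintype.sum_prod_type_right g, mutInfo, mutInfo]
  ring

end Product

section Marginals

variable {X Y Z : Type*} {p : X × Y × Z → ℝ}

theorem margYZ_nonneg [Fintype X] (hp : 0 ≤ p) : 0 ≤ margYZ p :=
  fun _ => sum_nonneg fun _ _ => hp _

theorem pY_nonneg [Fintype X] [Fintype Z] (hp : 0 ≤ p) : 0 ≤ pY p :=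
  fun _ => sum_nonneg fun _ _ => sum_nonneg fun _ _ => hp _

theorem pZ_nonneg [Fintype X] [Fintype Y] (hp : 0 ≤ p) : 0 ≤ pZ p :=
  fun _ => sum_nonneg fun _ _ => sum_nonneg fun _ _ => hp _

theorem margYZ_le_pZ [Fintype X] [Fintype Y] (hp : 0 ≤ p) (y : Y) (z : Z) :
    margYZ p (y, z) ≤ pZ p z :=
  sum_le_sum fun x _ => single_le_sum (f := fun y => p (x, y, z)) (fun _ _ => hp _) (mem_univ y)

variable [Fintype X] [Fintype Y] [Fintype Z]

theorem sum_margXZ (p : X × Y × Z → ℝ) : ∑ t, margXZ p t = ∑ t, p t := by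
  simp only [margXZ, Fintype.sum_prod_type]
  exact Fintype.sum_congr _ _ fun _ => sum_comm

theorem sum_margYZ (p : X × Y × Z → ℝ) : ∑ t, margYZ p t = ∑ t, p t :=
  (Fintype.sum_prod_type_right p).symm

theorem sum_margXY (p : X × Y × Z → ℝ) : ∑ t, margXY p t = ∑ t, p t := by
  simp only [margXY, Fintype.sum_prod_type]

theorem sum_pY (p : X × Y × Z → ℝ) : ∑ y, pY p y = ∑ t, p t := by
  simp only [pY, Fintype.sum_prod_type]
  exact sum_comm

theorem sum_pZ (p : X × Y × Z → ℝ) : ∑ z, pZ p z = ∑ t, p t := by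
  rw [← sum_margXZ, Fintype.sum_prod_type_right]
  rfl

end Marginals

section Intervention

variable {X Y Z : Type*} {p : X × Y × Z → ℝ}

theorem doOp_apply [Fintype X] [Fintype Y] (hp : 0 ≤ p) (c : Z → ℝ) (t : X × Y × Z) :
    doOp p c t = p t * c t.2.2 / pZ p t.2.2 := by
  rcases (pZ_nonneg hp t.2.2).eq_or_lt with hz | hz
  · simp [doOp, ← hz]
  · exact if_pos hz

theorem pZ_doOp [Fintype X] [Fintype Y] (hp : 0 ≤ p) {c : Z → ℝ} {z : Z}
    (hc : pZ p z = 0 → c z = 0) : pZ (doOp p c) z = c z := by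
  calc pZ (doOp p c) z = pZ p z * c z / pZ p z := by
        simp only [pZ, doOp_apply hp, sum_mul, sum_div]
    _ = c z := mul_div_cancel_left_of_imp hc

theorem sum_cy [Fintype X] [Fintype Z] {y : Y} (hy : pY p y ≠ 0) : ∑ z, cy p y z = 1 := by
  simp only [cy, ← sum_div]
  rw [sum_comm]
  exact div_self hy

variable [Fintype X] [Fintype Y] [Fintype Z]

theorem cy_eq_zero_of_pZ_eq_zero (hp : 0 ≤ p) (y : Y) {z : Z} (hz : pZ p z = 0) :
    cy p y z = 0 := by
  have margYZ_eq_zero : margYZ p (y, z) = 0 :=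
    le_antisymm (hz ▸ margYZ_le_pZ hp y z) (margYZ_nonneg hp (y, z))
  exact div_eq_zero_iff.2 (Or.inl margYZ_eq_zero)

theorem sum_doy (hp : 0 ≤ p) {y : Y} (hy : pY p y ≠ 0) : ∑ t, doy p y t = 1 := by
  calc ∑ t, doy p y t = ∑ z, pZ (doy p y) z := (sum_pZ _).symm
    _ = ∑ z, cy p y z :=
        Fintype.sum_congr _ _ fun _ => pZ_doOp hp (cy_eq_zero_of_pZ_eq_zero hp y)
    _ = 1 := sum_cy hy

theorem Un_eq_sum (hp : 0 ≤ p) : Un p = ∑ y, pY p y * mutInfo (margXZ (doy p y)) := by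
  refine sum_subset (filter_subset _ _) fun y _ hy => ?_
  have hy0 : pY p y = 0 := le_antisymm (by simpa using hy) (pY_nonneg hp y)
  rw [hy0, zero_mul]

end Intervention

section Additivity

variable {X Y Z X' Y' Z' : Type*}

/-- The product of a joint law of `(X, Y, Z)` and a joint law of `(X', Y', Z')`, regrouped as a
joint law of `((X, X'), (Y, Y'), (Z, Z'))`: the composite system whose information is decomposed. -/
def prodDist₃ (p : X × Y × Z → ℝ) (p' : X' × Y' × Z' → ℝ) :
    (X × X') × (Y × Y') × (Z × Z') → ℝ :=
  fun s => p (s.1.1, s.2.1.1, s.2.2.1) * p' (s.1.2, s.2.1.2, s.2.2.2)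

variable {p : X × Y × Z → ℝ} {p' : X' × Y' × Z' → ℝ}

theorem prodDist₃_nonneg (hp : 0 ≤ p) (hp' : 0 ≤ p') : 0 ≤ prodDist₃ p p' :=
  fun _ => mul_nonneg (hp _) (hp' _)

theorem margXZ_prodDist₃ [Fintype Y] [Fintype Y']
    (p : X × Y × Z → ℝ) (p' : X' × Y' × Z' → ℝ) :
    margXZ (prodDist₃ p p') = prodDist₂ (margXZ p) (margXZ p') :=
  funext fun s => sum_prodDist (fun y => p (s.1.1, y, s.2.1)) fun y => p' (s.1.2, y, s.2.2)

theorem margYZ_prodDist₃ [Fintype X] [Fintype X']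
    (p : X × Y × Z → ℝ) (p' : X' × Y' × Z' → ℝ) :
    margYZ (prodDist₃ p p') = prodDist₂ (margYZ p) (margYZ p') :=
  funext fun s => sum_prodDist (fun x => p (x, s.1.1, s.2.1)) fun x => p' (x, s.1.2, s.2.2)

theorem margXY_prodDist₃ [Fintype Z] [Fintype Z']
    (p : X × Y × Z → ℝ) (p' : X' × Y' × Z' → ℝ) :
    margXY (prodDist₃ p p') = prodDist₂ (margXY p) (margXY p') :=
  funext fun s => sum_prodDist (fun z => p (s.1.1, s.2.1, z)) fun z => p' (s.1.2, s.2.2, z)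

theorem pY_prodDist₃ [Fintype X] [Fintype Z] [Fintype X'] [Fintype Z']
    (p : X × Y × Z → ℝ) (p' : X' × Y' × Z' → ℝ) :
    pY (prodDist₃ p p') = prodDist (pY p) (pY p') := by
  funext y
  calc pY (prodDist₃ p p') y
      = ∑ x, prodDist (fun x => margXY p (x, y.1)) (fun x => margXY p' (x, y.2)) x :=
        Fintype.sum_congr _ _ fun x => congrFun (margXY_prodDist₃ p p') (x, y)
    _ = prodDist (pY p) (pY p') y := sum_prodDist _ _

theorem pZ_prodDist₃ [Fintype X] [Fintype Y] [Fintype X'] [Fintype Y']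
    (p : X × Y × Z → ℝ) (p' : X' × Y' × Z' → ℝ) :
    pZ (prodDist₃ p p') = prodDist (pZ p) (pZ p') := by
  funext z
  calc pZ (prodDist₃ p p') z
      = ∑ x, prodDist (fun x => margXZ p (x, z.1)) (fun x => margXZ p' (x, z.2)) x :=
        Fintype.sum_congr _ _ fun x => congrFun (margXZ_prodDist₃ p p') (x, z)
    _ = prodDist (pZ p) (pZ p') z := sum_prodDist _ _

theorem cy_prodDist₃ [Fintype X] [Fintype Z] [Fintype X'] [Fintype Z']
    (p : X × Y × Z → ℝ) (p' : X' × Y' × Z' → ℝ) (y : Y × Y') :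
    cy (prodDist₃ p p') y = prodDist (cy p y.1) (cy p' y.2) := by
  funext z
  calc cy (prodDist₃ p p') y z = margYZ (prodDist₃ p p') (y, z) / pY (prodDist₃ p p') y := rfl
    _ = margYZ p (y.1, z.1) * margYZ p' (y.2, z.2) / (pY p y.1 * pY p' y.2) := by
        rw [margYZ_prodDist₃, pY_prodDist₃]
        rfl
    _ = prodDist (cy p y.1) (cy p' y.2) z := mul_div_mul_comm _ _ _ _

theorem doOp_prodDist₃ [Fintype X] [Fintype Y] [Fintype X'] [Fintype Y']
    (hp : 0 ≤ p) (hp' : 0 ≤ p') (c : Z → ℝ) (c' : Z' → ℝ) :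
    doOp (prodDist₃ p p') (prodDist c c') = prodDist₃ (doOp p c) (doOp p' c') := by
  funext t
  rw [doOp_apply (prodDist₃_nonneg hp hp'), pZ_prodDist₃]
  simp only [prodDist₃, prodDist, doOp_apply hp, doOp_apply hp']
  rw [mul_mul_mul_comm, mul_div_mul_comm]

variable [Fintype X] [Fintype Y] [Fintype Z] [Fintype X'] [Fintype Y'] [Fintype Z']

theorem ent_prodDist₃ (p : X × Y × Z → ℝ) (p' : X' × Y' × Z' → ℝ) :
    ent (prodDist₃ p p') = (∑ t, p' t) * ent p + (∑ t, p t) * ent p' := by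
  rw [← ent_prodDist₂]
  exact ent_comp_equiv ((Equiv.refl (X × X')).prodCongr (Equiv.prodProdProdComm Y Y' Z Z'))
    (prodDist₂ p p')

theorem doy_prodDist₃ (hp : 0 ≤ p) (hp' : 0 ≤ p') (y : Y × Y') :
    doy (prodDist₃ p p') y = prodDist₃ (doy p y.1) (doy p' y.2) := by
  rw [doy, cy_prodDist₃]
  exact doOp_prodDist₃ hp hp' _ _

theorem mutInfo_doy_prodDist₃ (hp : 0 ≤ p) (hp' : 0 ≤ p') {y : Y × Y'}
    (hy : pY p y.1 ≠ 0) (hy' : pY p' y.2 ≠ 0) :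
    mutInfo (margXZ (doy (prodDist₃ p p') y)) =
      mutInfo (margXZ (doy p y.1)) + mutInfo (margXZ (doy p' y.2)) := by
  rw [doy_prodDist₃ hp hp', margXZ_prodDist₃, mutInfo_prodDist₂, sum_margXZ, sum_margXZ,
    sum_doy hp hy, sum_doy hp' hy', one_mul, one_mul]

theorem Un_prodDist₃ (hp : 0 ≤ p) (hp' : 0 ≤ p') :
    Un (prodDist₃ p p') = (∑ t, p' t) * Un p + (∑ t, p t) * Un p' := by
  let u : Y → ℝ := fun y => pY p y * mutInfo (margXZ (doy p y))
  let u' : Y' → ℝ := fun y => pY p' y * mutInfo (margXZ (doy p' y))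
  have summand_eq (y : Y × Y') :
      pY (prodDist₃ p p') y * mutInfo (margXZ (doy (prodDist₃ p p') y)) =
        prodDist u (pY p') y + prodDist (pY p) u' y := by
    simp only [pY_prodDist₃, prodDist, u, u']
    by_cases hy : pY p y.1 = 0
    · simp only [hy, zero_mul, add_zero]
    by_cases hy' : pY p' y.2 = 0
    · simp only [hy', zero_mul, mul_zero, add_zero]
    rw [mutInfo_doy_prodDist₃ hp hp' hy hy']
    ring
  calc Un (prodDist₃ p p')
      = ∑ y, (prodDist u (pY p') y + prodDist (pY p) u' y) :=
        (Un_eq_sum (prodDist₃_nonneg hp hp')).trans (Fintype.sum_congr _ _ summand_eq)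
    _ = (∑ t, p' t) * Un p + (∑ t, p t) * Un p' := by
        rw [sum_add_distrib, sum_prodDist, sum_prodDist, sum_pY, sum_pY, Un_eq_sum hp,
          Un_eq_sum hp', mul_comm (∑ t, p' t)]

theorem condMI_prodDist₃ (p : X × Y × Z → ℝ) (p' : X' × Y' × Z' → ℝ) :
    condMI (prodDist₃ p p') = (∑ t, p' t) * condMI p + (∑ t, p t) * condMI p' := by
  rw [condMI, margXY_prodDist₃, margYZ_prodDist₃, pY_prodDist₃, ent_prodDist₂, ent_prodDist₂,
    ent_prodDist, ent_prodDist₃, sum_margXY, sum_margXY, sum_margYZ, sum_margYZ, sum_pY, sum_pY,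
    condMI, condMI]
  ring

theorem Red_prodDist₃ (hp : 0 ≤ p) (hp' : 0 ≤ p') :
    Red (prodDist₃ p p') = (∑ t, p' t) * Red p + (∑ t, p t) * Red p' := by
  rw [Red, margXZ_prodDist₃, mutInfo_prodDist₂, sum_margXZ, sum_margXZ, Un_prodDist₃ hp hp',
    Red, Red]
  ring

theorem Syn_prodDist₃ (hp : 0 ≤ p) (hp' : 0 ≤ p') :
    Syn (prodDist₃ p p') = (∑ t, p' t) * Syn p + (∑ t, p t) * Syn p' := by
  rw [Syn, condMI_prodDist₃, Un_prodDist₃ hp hp', Syn, Syn]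
  ring

theorem stmt17_general (hp : 0 ≤ p) (hp' : 0 ≤ p') :
    Red (prodDist₃ p p') = (∑ t, p' t) * Red p + (∑ t, p t) * Red p' ∧
      Syn (prodDist₃ p p') = (∑ t, p' t) * Syn p + (∑ t, p t) * Syn p' :=
  ⟨Red_prodDist₃ hp hp', Syn_prodDist₃ hp hp'⟩

end Additivity

theorem stmt17 {X Y Z X' Y' Z' : Type*}
    [Fintype X] [Fintype Y] [Fintype Z] [Fintype X'] [Fintype Y'] [Fintype Z']
    [Nonempty X] [Nonempty Y] [Nonempty Z] [Nonempty X'] [Nonempty Y'] [Nonempty Z']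
    (p : X × Y × Z → ℝ) (hp0 : ∀ t, 0 ≤ p t) (hp1 : ∑ t, p t = 1)
    (p' : X' × Y' × Z' → ℝ) (hp'0 : ∀ t, 0 ≤ p' t) (hp'1 : ∑ t, p' t = 1) :
    Red (fun s : (X × X') × (Y × Y') × (Z × Z') =>
      p (s.1.1, s.2.1.1, s.2.2.1) * p' (s.1.2, s.2.1.2, s.2.2.2)) = Red p + Red p' ∧
    Syn (fun s : (X × X') × (Y × Y') × (Z × Z') =>
      p (s.1.1, s.2.1.1, s.2.2.1) * p' (s.1.2, s.2.1.2, s.2.2.2)) = Syn p + Syn p' := by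
  change Red (prodDist₃ p p') = _ ∧ Syn (prodDist₃ p p') = _
  simpa only [hp1, hp'1, one_mul] using stmt17_general hp0 hp'0
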